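/- Guarded interpolation for L*₁◇_m: if Γ[Δ] ⇒ C is provable in L*₁◇_m, all types occurring in it are guarded (the unit 1 occurs only as immediate subtype of some ◇_i 1), and Δ is a nonempty hedge, then there is a guarded type E with Δ ⇒ E and Γ[E] ⇒ C provable, σ_i(E) ≤ min(σ_i(Δ), σ_i(Γ[·] ⇒ C)), and τ_i(E) ≤ min(τ_i(Δ), τ_i(Γ[·] ⇒ C)) for each i. -/

import Mathlib

/-- Types of the multimodal bracketed Lambek calculus. -/
inductive ITy where
  | prim : ℕ → ITy
  | one  : ITy
  | ldiv : ITy → ITy → ITy   -- ldiv A B = A \ B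
  | rdiv : ITy → ITy → ITy   -- rdiv B A = B / A
  | mul  : ITy → ITy → ITy
  | dia  : ℕ → ITy → ITy
  | box  : ℕ → ITy → ITy
deriving DecidableEq

/-- Type trees: leaves labeled by types, internal nodes are indexed brackets. -/
inductive ITree where
  | leaf : ITy → ITree
  | node : ℕ → List ITree → ITree

abbrev IHedge := List ITree

/-- Contexts: a hedge with one distinguished hole. -/
inductive ICtx where
  | hole : IHedge → IHedge → ICtx
  | brk  : ℕ → ICtx → IHedge → IHedge → ICtx

/-- Substitution of a hedge for the hole of a context. -/
def ICtx.plug : ICtx → IHedge → IHedge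
  | .hole pre post, D => pre ++ D ++ post
  | .brk i c pre post, D => pre ++ (ITree.node i (c.plug D) :: post)

/-- Generators of the free group: primitive types, left brackets, right brackets. -/
abbrev Gen := ℕ ⊕ ℕ ⊕ ℕ

def lb (i : ℕ) : FreeGroup Gen := FreeGroup.of (Sum.inr (Sum.inl i))
def rb (i : ℕ) : FreeGroup Gen := FreeGroup.of (Sum.inr (Sum.inr i))

/-- Free group interpretation of types. -/
def interpTy : ITy → FreeGroup Gen
  | .prim p => FreeGroup.of (Sum.inl p)
  | .one => 1
  | .ldiv A B => (interpTy A)⁻¹ * interpTy B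
  | .rdiv B A => interpTy B * (interpTy A)⁻¹
  | .mul A B => interpTy A * interpTy B
  | .dia i A => lb i * interpTy A * rb i
  | .box i A => (lb i)⁻¹ * interpTy A * (rb i)⁻¹

mutual
/-- Free group interpretation of type trees. -/
def interpTree : ITree → FreeGroup Gen
  | .leaf A => interpTy A
  | .node i ts => lb i * interpHedge ts * rb i
/-- Free group interpretation of hedges. -/
def interpHedge : List ITree → FreeGroup Gen
  | [] => 1
  | t :: ts => interpTree t * interpHedge ts
end

/-- Length of a type. -/
def lenTy : ITy → ℕ
  | .prim _ => 1
  | .one => 0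
  | .ldiv A B => lenTy A + lenTy B
  | .rdiv B A => lenTy B + lenTy A
  | .mul A B => lenTy A + lenTy B
  | .dia _ A => lenTy A + 2
  | .box _ A => lenTy A + 2

/-- Number of occurrences of the primitive type `p_i` in a type. -/
def sigmaTy (i : ℕ) : ITy → ℕ
  | .prim p => if p = i then 1 else 0
  | .one => 0
  | .ldiv A B => sigmaTy i A + sigmaTy i B
  | .rdiv B A => sigmaTy i B + sigmaTy i A
  | .mul A B => sigmaTy i A + sigmaTy i B
  | .dia _ A => sigmaTy i A
  | .box _ A => sigmaTy i A

/-- Total number of occurrences of `◇_i`, `□↓_i` in a type. -/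
def tauTy (i : ℕ) : ITy → ℕ
  | .prim _ => 0
  | .one => 0
  | .ldiv A B => tauTy i A + tauTy i B
  | .rdiv B A => tauTy i B + tauTy i A
  | .mul A B => tauTy i A + tauTy i B
  | .dia j A => (if j = i then 1 else 0) + tauTy i A
  | .box j A => (if j = i then 1 else 0) + tauTy i A

mutual
def sigmaTree (i : ℕ) : ITree → ℕ
  | .leaf A => sigmaTy i A
  | .node _ ts => sigmaHedge i ts
def sigmaHedge (i : ℕ) : List ITree → ℕ
  | [] => 0
  | t :: ts => sigmaTree i t + sigmaHedge i ts
end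

mutual
/-- Total occurrences of `⟨_i`, `◇_i`, `□↓_i` in a tree. -/
def tauTree (i : ℕ) : ITree → ℕ
  | .leaf A => tauTy i A
  | .node j ts => (if j = i then 1 else 0) + tauHedge i ts
def tauHedge (i : ℕ) : List ITree → ℕ
  | [] => 0
  | t :: ts => tauTree i t + tauHedge i ts
end

def sigmaCtx (i : ℕ) : ICtx → ℕ
  | .hole pre post => sigmaHedge i pre + sigmaHedge i post
  | .brk _ c pre post => sigmaHedge i pre + sigmaCtx i c + sigmaHedge i post

def tauCtx (i : ℕ) : ICtx → ℕ
  | .hole pre post => tauHedge i pre + tauHedge i post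
  | .brk j c pre post => (if j = i then 1 else 0) + tauHedge i pre + tauCtx i c + tauHedge i post
/-- L*₁◇_m : the multimodal Lambek calculus with brackets and unit, empty antecedents allowed. -/
inductive IProvS1 : IHedge → ITy → Prop where
  | id (p) : IProvS1 [.leaf (.prim p)] (.prim p)
  | ldivL (G : IHedge) (D : ICtx) (A B C) :
      IProvS1 G A → IProvS1 (D.plug [.leaf B]) C →
      IProvS1 (D.plug (G ++ [.leaf (.ldiv A B)])) C
  | ldivR (Pi : IHedge) (A B) :
      IProvS1 (.leaf A :: Pi) B → IProvS1 Pi (.ldiv A B)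
  | rdivL (G : IHedge) (D : ICtx) (A B C) :
      IProvS1 G A → IProvS1 (D.plug [.leaf B]) C →
      IProvS1 (D.plug (.leaf (.rdiv B A) :: G)) C
  | rdivR (Pi : IHedge) (A B) :
      IProvS1 (Pi ++ [.leaf A]) B → IProvS1 Pi (.rdiv B A)
  | mulL (G : ICtx) (A B C) :
      IProvS1 (G.plug [.leaf A, .leaf B]) C → IProvS1 (G.plug [.leaf (.mul A B)]) C
  | mulR (G D : IHedge) (A B) :
      IProvS1 G A → IProvS1 D B → IProvS1 (G ++ D) (.mul A B)
  | diaL (G : ICtx) (i A B) :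
      IProvS1 (G.plug [.node i [.leaf A]]) B → IProvS1 (G.plug [.leaf (.dia i A)]) B
  | diaR (G : IHedge) (i A) :
      IProvS1 G A → IProvS1 [.node i G] (.dia i A)
  | boxL (G : ICtx) (i A B) :
      IProvS1 (G.plug [.leaf A]) B → IProvS1 (G.plug [.node i [.leaf (.box i A)]]) B
  | boxR (G : IHedge) (i A) :
      IProvS1 [.node i G] A → IProvS1 G (.box i A)
  | oneL (G : ICtx) (A) :
      IProvS1 (G.plug []) A → IProvS1 (G.plug [.leaf .one]) A
  | oneR : IProvS1 [] .one
  | cut (G : IHedge) (D : ICtx) (A B) :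
      IProvS1 G A → IProvS1 (D.plug [.leaf A]) B → IProvS1 (D.plug G) B
/-- Guarded types: the unit occurs only as the immediate subtype of some `◇_i`. -/
def ITy.guarded : ITy → Prop
  | .prim _ => True
  | .one => False
  | .ldiv A B => A.guarded ∧ B.guarded
  | .rdiv B A => B.guarded ∧ A.guarded
  | .mul A B => A.guarded ∧ B.guarded
  | .dia _ .one => True
  | .dia _ A => A.guarded
  | .box _ A => A.guarded

mutual
def guardedTree : ITree → Prop
  | .leaf A => A.guarded
  | .node _ ts => guardedHedge ts
def guardedHedge : List ITree → Prop
  | [] => True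
  | t :: ts => guardedTree t ∧ guardedHedge ts
end


namespace GI

def wtTy (f g : ℕ → ℕ) : ITy → ℕ
  | .prim p => f p
  | .one => 0
  | .ldiv A B => wtTy f g A + wtTy f g B
  | .rdiv B A => wtTy f g B + wtTy f g A
  | .mul A B => wtTy f g A + wtTy f g B
  | .dia j A => g j + wtTy f g A
  | .box j A => g j + wtTy f g A

mutual
def wtT (f g : ℕ → ℕ) : ITree → ℕ
  | .leaf A => wtTy f g A
  | .node j ts => g j + wtH f g ts
def wtH (f g : ℕ → ℕ) : List ITree → ℕ
  | [] => 0
  | t :: ts => wtT f g t + wtH f g ts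
end

def wtC (f g : ℕ → ℕ) : ICtx → ℕ
  | .hole pre post => wtH f g pre + wtH f g post
  | .brk j c pre post => g j + wtH f g pre + wtC f g c + wtH f g post

theorem wtH_append (f g : ℕ → ℕ) (a b : IHedge) : wtH f g (a ++ b) = wtH f g a + wtH f g b := by
  induction a with
  | nil => simp [wtH]
  | cons t ts ih => simp [wtH, ih, Nat.add_assoc]

theorem wtH_plug (f g : ℕ → ℕ) (c : ICtx) (X : IHedge) :
    wtH f g (c.plug X) = wtC f g c + wtH f g X := by
  induction c with
  | hole a b => simp [ICtx.plug, wtC, wtH_append]; omega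
  | brk i c a b ih => simp [ICtx.plug, wtC, wtH_append, wtH, wtT, ih]; omega

def comp : ICtx → ICtx → ICtx
  | .hole a b, .hole c d => .hole (a ++ c) (d ++ b)
  | .hole a b, .brk i k c d => .brk i k (a ++ c) (d ++ b)
  | .brk i c a b, k => .brk i (comp c k) a b

theorem comp_plug (c k : ICtx) (X : IHedge) : (comp c k).plug X = c.plug (k.plug X) := by
  induction c with
  | hole a b => cases k <;> simp [comp, ICtx.plug]
  | brk i c a b ih => simp [comp, ICtx.plug, ih]

theorem wtC_comp (f g : ℕ → ℕ) (c k : ICtx) : wtC f g (comp c k) = wtC f g c + wtC f g k := by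
  induction c with
  | hole a b => cases k <;> simp [comp, wtC, wtH_append] <;> omega
  | brk i c a b ih => simp [comp, wtC, ih]; omega

theorem comp_nil (c : ICtx) : comp c (.hole [] []) = c := by
  induction c with
  | hole a b => simp [comp]
  | brk i c a b ih => simp [comp, ih]

theorem comp_assoc (a b c : ICtx) : comp (comp a b) c = comp a (comp b c) := by
  induction a with
  | hole p q => cases b <;> cases c <;> simp [comp]
  | brk i k p q ih => simp [comp, ih]

theorem plug_ne_nil (c : ICtx) {X : IHedge} (h : X ≠ []) : c.plug X ≠ [] := by
  cases c <;> simp [ICtx.plug, h]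

/-- Relative position of two hedges in a common hedge. -/
def Rel (G : ICtx) (D : IHedge) (D' : ICtx) (X : IHedge) : Prop :=
  (∃ K, D = K.plug X ∧ D' = comp G K) ∨
  (∃ H K1 K2, D' = comp H (comp (.hole [] (K2.plug D)) K1) ∧
      G = comp H (comp (.hole (K1.plug X) []) K2)) ∨
  (∃ H K1 K2, D' = comp H (comp (.hole (K2.plug D) []) K1) ∧
      G = comp H (comp (.hole [] (K1.plug X)) K2)) ∨
  (∃ K, X = K.plug D ∧ G = comp D' K) ∨
  (∃ H D1 X1 X2, X = X1 ++ X2 ∧ D = D1 ++ X1 ∧ D' = comp H (.hole D1 []) ∧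
      G = comp H (.hole [] X2)) ∨
  (∃ H D2 X1 X2, X = X1 ++ X2 ∧ D = X2 ++ D2 ∧ D' = comp H (.hole [] D2) ∧
      G = comp H (.hole X1 []))

theorem Rel.symm {G D D' X} (h : Rel G D D' X) : Rel D' X G D := by
  rcases h with ⟨K, h1, h2⟩ | ⟨H, K1, K2, h1, h2⟩ | ⟨H, K1, K2, h1, h2⟩ | ⟨K, h1, h2⟩ |
    ⟨H, D1, X1, X2, h1, h2, h3, h4⟩ | ⟨H, D1, X1, X2, h1, h2, h3, h4⟩
  · exact .inr (.inr (.inr (.inl ⟨K, h1, h2⟩)))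
  · exact .inr (.inr (.inl ⟨H, K2, K1, h2, h1⟩))
  · exact .inr (.inl ⟨H, K2, K1, h2, h1⟩)
  · exact .inl ⟨K, h1, h2⟩
  · exact .inr (.inr (.inr (.inr (.inr ⟨H, X2, D1, X1, h2, h1, h4, h3⟩))))
  · exact .inr (.inr (.inr (.inr (.inl ⟨H, X1, X2, D1, h2, h1, h4, h3⟩))))

theorem rel_brk {G D D' X} (i a b) (h : Rel G D D' X) :
    Rel (.brk i G a b) D (.brk i D' a b) X := by
  rcases h with ⟨K, h1, h2⟩ | ⟨H, K1, K2, h1, h2⟩ | ⟨H, K1, K2, h1, h2⟩ | ⟨K, h1, h2⟩ |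
    ⟨H, D1, X1, X2, h1, h2, h3, h4⟩ | ⟨H, D1, X1, X2, h1, h2, h3, h4⟩
  · exact .inl ⟨K, h1, by simp [comp, h2]⟩
  · exact .inr (.inl ⟨.brk i H a b, K1, K2, by simp only [comp, h1], by simp only [comp, h2]⟩)
  · exact .inr (.inr (.inl ⟨.brk i H a b, K1, K2, by simp only [comp, h1], by simp only [comp, h2]⟩))
  · exact .inr (.inr (.inr (.inl ⟨K, h1, by simp [comp, h2]⟩)))
  · exact .inr (.inr (.inr (.inr (.inl ⟨.brk i H a b, D1, X1, X2, h1, h2, by simp [comp, h3],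
      by simp [comp, h4]⟩))))
  · exact .inr (.inr (.inr (.inr (.inr ⟨.brk i H a b, D1, X1, X2, h1, h2, by simp [comp, h3],
      by simp [comp, h4]⟩))))

theorem rel_hole_aux (a D b u X b' : IHedge) (h : D ++ b = u ++ (X ++ b')) :
    Rel (.hole a b) D (.hole (a ++ u) b') X := by
  rcases List.append_eq_append_iff.1 h with ⟨v, h1, h2⟩ | ⟨v, h1, h2⟩
  · subst h1 h2
    exact .inr (.inr (.inl ⟨.hole a b', .hole v [], .hole [] [], by simp [comp, ICtx.plug],
      by simp [comp, ICtx.plug]⟩))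
  · subst h1
    rcases List.append_eq_append_iff.1 h2 with ⟨w, h3, h4⟩ | ⟨w, h3, h4⟩
    · subst h3 h4
      exact .inl ⟨.hole u w, by simp [ICtx.plug], by simp [comp]⟩
    · subst h3 h4
      exact .inr (.inr (.inr (.inr (.inl ⟨.hole a b', u, v, w, rfl, rfl, by simp [comp],
        by simp [comp]⟩))))

theorem rel_hole_brk (a b p q : IHedge) (i : ℕ) (c : ICtx) (D X : IHedge)
    (h : a ++ (D ++ b) = p ++ ITree.node i (c.plug X) :: q) :
    Rel (.hole a b) D (.brk i c p q) X := by
  rcases List.append_eq_append_iff.1 h with ⟨u, h1, h2⟩ | ⟨u, h1, h2⟩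
  · subst h1
    rcases List.append_eq_append_iff.1 h2 with ⟨v, h3, h4⟩ | ⟨v, h3, h4⟩
    · subst h3 h4
      exact .inr (.inr (.inl ⟨.hole a q, .brk i c v [], .hole [] [], by simp [comp, ICtx.plug],
        by simp [comp, ICtx.plug]⟩))
    · rcases v with _ | ⟨t, v⟩
      · simp at h3 h4
        subst h3 h4
        exact .inr (.inr (.inl ⟨.hole a q, .brk i c [] [], .hole [] [], by simp [comp, ICtx.plug],
          by simp [comp, ICtx.plug]⟩))
      · simp at h4
        obtain ⟨rfl, rfl⟩ := h4
        subst h3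
        exact .inl ⟨.brk i c u v, by simp [ICtx.plug], by simp [comp]⟩
  · rcases u with _ | ⟨t, u⟩
    · simp at h1 h2
      subst h1
      rcases D with _ | ⟨t, D⟩
      · simp at h2
        subst h2
        exact .inr (.inr (.inl ⟨.hole a q, .brk i c [] [], .hole [] [], by simp [comp, ICtx.plug],
          by simp [comp, ICtx.plug]⟩))
      · simp at h2
        obtain ⟨rfl, rfl⟩ := h2
        exact .inl ⟨.brk i c [] D, by simp [ICtx.plug], by simp [comp]⟩
    · simp at h2
      obtain ⟨rfl, rfl⟩ := h2
      subst h1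
      exact .inr (.inl ⟨.hole p b, .brk i c [] u, .hole [] [], by simp [comp, ICtx.plug],
          by simp [comp, ICtx.plug]⟩)

theorem rel_brk_aux (a b u q : IHedge) (i j : ℕ) (c c' : ICtx) (D X : IHedge)
    (h : ITree.node i (c.plug D) :: b = u ++ ITree.node j (c'.plug X) :: q)
    (ih : c.plug D = c'.plug X → Rel c D c' X) :
    Rel (.brk i c a b) D (.brk j c' (a ++ u) q) X := by
  rcases u with _ | ⟨t, u⟩
  · simp at h
    obtain ⟨⟨rfl, h⟩, rfl⟩ := h
    simpa using rel_brk i a b (ih h)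
  · simp at h
    obtain ⟨rfl, rfl⟩ := h
    exact .inr (.inr (.inl ⟨.hole a q, .brk j c' u [], .brk i c [] [], by simp [comp, ICtx.plug],
          by simp [comp, ICtx.plug]⟩))

theorem rel_of_eq (G : ICtx) (D : IHedge) (D' : ICtx) (X : IHedge)
    (h : G.plug D = D'.plug X) : Rel G D D' X := by
  induction G generalizing D' with
  | hole a b =>
    cases D' with
    | hole a' b' =>
      simp only [ICtx.plug, List.append_assoc] at h
      rcases List.append_eq_append_iff.1 h with ⟨u, h1, h2⟩ | ⟨u, h1, h2⟩
      · subst h1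
        exact rel_hole_aux _ _ _ _ _ _ h2
      · subst h1
        exact (rel_hole_aux _ _ _ _ _ _ h2).symm
    | brk i c p q =>
      simp only [ICtx.plug, List.append_assoc] at h
      exact rel_hole_brk _ _ _ _ _ _ _ _ h
  | brk i c a b ih =>
    cases D' with
    | hole a' b' =>
      simp only [ICtx.plug, List.append_assoc] at h
      exact (rel_hole_brk _ _ _ _ _ _ _ _ h.symm).symm
    | brk j c' p q =>
      simp only [ICtx.plug] at h
      rcases List.append_eq_append_iff.1 h with ⟨u, h1, h2⟩ | ⟨u, h1, h2⟩
      · subst h1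
        exact rel_brk_aux _ _ _ _ _ _ _ _ _ _ h2 (ih c')
      · subst h1
        exact (rel_brk_aux _ _ _ _ _ _ _ _ _ _ h2 (fun e => (ih c' e.symm).symm)).symm

def Interp (G : ICtx) (D : IHedge) (C : ITy) : Prop :=
  ∃ E : ITy, E.guarded ∧ IProvS1 D E ∧ IProvS1 (G.plug [.leaf E]) C ∧
    ∀ f g, wtTy f g E ≤ wtH f g D ∧ wtTy f g E ≤ wtC f g G + wtTy f g C

def Good (S : IHedge) (C : ITy) : Prop :=
  IProvS1 S C ∧ ∀ G D, D ≠ [] → S = G.plug D → Interp G D C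

theorem guarded_dia {i A} (h : A.guarded) : (ITy.dia i A).guarded := by
  cases A <;> simp_all [ITy.guarded]

theorem guarded_dia_cases {i A} (h : (ITy.dia i A).guarded) : A = .one ∨ A.guarded := by
  cases A <;> simp_all [ITy.guarded]

/-- The part common to all left rules. -/
theorem left_main (X Y : IHedge) (hY : Y ≠ [])
    (hr : ∀ (c : ICtx) C, IProvS1 (c.plug Y) C → IProvS1 (c.plug X) C)
    (hw : ∀ f g, wtH f g Y ≤ wtH f g X)
    (c : ICtx) (C : ITy) (hg : Good (c.plug Y) C)
    (h4 : ∀ K D, D ≠ [] → X = K.plug D → Interp (comp c K) D C)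
    (h5 : ∀ H D1 X1 X2, X1 ≠ [] → X2 ≠ [] → D1 ≠ [] → X = X1 ++ X2 → c = comp H (.hole D1 []) →
      Interp (comp H (.hole [] X2)) (D1 ++ X1) C)
    (h6 : ∀ H D2 X1 X2, X1 ≠ [] → X2 ≠ [] → D2 ≠ [] → X = X1 ++ X2 → c = comp H (.hole [] D2) →
      Interp (comp H (.hole X1 [])) (X2 ++ D2) C) :
    Good (c.plug X) C := by
  refine ⟨hr _ _ hg.1, fun G D hD he => ?_⟩
  have ha : ∀ G K, c = comp G K → Interp G (K.plug X) C := by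
    intro G K e
    obtain ⟨E, e1, e2, e3, e4⟩ := hg.2 G (K.plug Y) (plug_ne_nil _ hY) (by rw [e, comp_plug])
    refine ⟨E, e1, hr _ _ e2, e3, fun f g => ⟨?_, (e4 f g).2⟩⟩
    have := (e4 f g).1
    have := hw f g
    simp only [wtH_plug] at *
    omega
  have hb : ∀ H K1 K2 D, D ≠ [] → c = comp H (comp (.hole [] (K2.plug D)) K1) →
      Interp (comp H (comp (.hole (K1.plug X) []) K2)) D C := by
    intro H K1 K2 D hD e
    obtain ⟨E, e1, e2, e3, e4⟩ := hg.2 (comp H (comp (.hole (K1.plug Y) []) K2)) D hD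
      (by simp [e, comp_plug, ICtx.plug])
    refine ⟨E, e1, e2, ?_, fun f g => ⟨(e4 f g).1, ?_⟩⟩
    · have := hr (comp H (comp (.hole [] (K2.plug [.leaf E])) K1)) C
        (by simpa [comp_plug, ICtx.plug] using e3)
      simpa [comp_plug, ICtx.plug] using this
    · have := (e4 f g).2
      have := hw f g
      simp only [wtH_plug, wtC_comp, wtC, wtH] at *
      omega
  have hc : ∀ H K1 K2 D, D ≠ [] → c = comp H (comp (.hole (K2.plug D) []) K1) →
      Interp (comp H (comp (.hole [] (K1.plug X)) K2)) D C := by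
    intro H K1 K2 D hD e
    obtain ⟨E, e1, e2, e3, e4⟩ := hg.2 (comp H (comp (.hole [] (K1.plug Y)) K2)) D hD
      (by simp [e, comp_plug, ICtx.plug])
    refine ⟨E, e1, e2, ?_, fun f g => ⟨(e4 f g).1, ?_⟩⟩
    · have := hr (comp H (comp (.hole (K2.plug [.leaf E]) []) K1)) C
        (by simpa [comp_plug, ICtx.plug] using e3)
      simpa [comp_plug, ICtx.plug] using this
    · have := (e4 f g).2
      have := hw f g
      simp only [wtH_plug, wtC_comp, wtC, wtH] at *
      omega
  rcases rel_of_eq _ _ _ _ he.symm with ⟨K, h1, h2⟩ | ⟨H, K1, K2, h1, h2⟩ | ⟨H, K1, K2, h1, h2⟩ |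
    ⟨K, h1, h2⟩ | ⟨H, D1, X1, X2, h1, h2, h3, h7⟩ | ⟨H, D1, X1, X2, h1, h2, h3, h7⟩
  · rw [h1]; exact ha _ _ h2
  · rw [h2]; exact hb _ _ _ _ hD h1
  · rw [h2]; exact hc _ _ _ _ hD h1
  · rw [h2]; exact h4 K D hD h1
  · by_cases hX1 : X1 = []
    · subst hX1
      have := hc H (.hole [] []) (.hole [] []) D hD (by simp [h3, h2, comp, ICtx.plug])
      simpa [h7, h1, comp, ICtx.plug] using this
    by_cases hX2 : X2 = []
    · subst hX2
      have := ha G (.hole D1 []) (by rw [h3, h7, comp_nil])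
      simpa [h1, h2, ICtx.plug] using this
    by_cases hD1 : D1 = []
    · subst hD1
      have := h4 (.hole [] X2) X1 hX1 (by simp [h1, ICtx.plug])
      rw [h3, comp_nil] at this
      simpa [h7, h2] using this
    rw [h2, h7]; exact h5 _ _ _ _ hX1 hX2 hD1 h1 h3
  · by_cases hX2 : X2 = []
    · subst hX2
      have := hb H (.hole [] []) (.hole [] []) D hD (by simp [h3, h2, comp, ICtx.plug])
      simpa [h7, h1, comp, ICtx.plug] using this
    by_cases hX1 : X1 = []
    · subst hX1
      have := ha G (.hole [] D1) (by rw [h3, h7, comp_nil])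
      simpa [h1, h2, ICtx.plug] using this
    by_cases hD1 : D1 = []
    · subst hD1
      have := h4 (.hole X1 []) X2 hX2 (by simp [h1, ICtx.plug])
      rw [h3, comp_nil] at this
      simpa [h7, h2] using this
    rw [h2, h7]; exact h6 _ _ _ _ hX1 hX2 hD1 h1 h3

theorem plug_eq_single {K : ICtx} {D : IHedge} {t : ITree} (hD : D ≠ []) (h : [t] = K.plug D) :
    (K = .hole [] [] ∧ D = [t]) ∨ ∃ i c, K = .brk i c [] [] ∧ t = .node i (c.plug D) := by
  cases K with
  | hole a b =>
    left
    have := congrArg List.length h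
    have hl : 0 < D.length := List.length_pos_iff.2 hD
    simp [ICtx.plug] at this
    have ha : a = [] := List.length_eq_zero_iff.1 (by omega)
    have hb : b = [] := List.length_eq_zero_iff.1 (by omega)
    subst ha hb
    simpa [ICtx.plug] using h.symm
  | brk i c p q =>
    right
    have := congrArg List.length h
    simp [ICtx.plug] at this
    have ha : p = [] := List.length_eq_zero_iff.1 (by omega)
    have hb : q = [] := List.length_eq_zero_iff.1 (by omega)
    subst ha hb
    exact ⟨i, c, rfl, by simpa [ICtx.plug] using h⟩

theorem single_split {t : ITree} {X1 X2 : IHedge} (h1 : X1 ≠ []) (h2 : X2 ≠ [])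
    (h : [t] = X1 ++ X2) : False := by
  have := congrArg List.length h
  have := List.length_pos_iff.2 h1
  have := List.length_pos_iff.2 h2
  simp at *
  omega

theorem left_single (t : ITree) (Y : IHedge) (hY : Y ≠ [])
    (hr : ∀ (c : ICtx) C, IProvS1 (c.plug Y) C → IProvS1 (c.plug [t]) C)
    (hw : ∀ f g, wtH f g Y ≤ wtH f g [t])
    (c : ICtx) (C : ITy) (hg : Good (c.plug Y) C)
    (h4 : ∀ i k D, D ≠ [] → t = .node i (k.plug D) → Interp (comp c (.brk i k [] [])) D C) :
    Good (c.plug [t]) C := by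
  refine left_main [t] Y hY hr hw c C hg ?_ ?_ ?_
  · intro K D hD h
    rcases plug_eq_single hD h with ⟨rfl, rfl⟩ | ⟨i, k, rfl, h0⟩
    · rw [comp_nil]
      obtain ⟨E, e1, e2, e3, e4⟩ := hg.2 c Y hY rfl
      refine ⟨E, e1, ?_, e3, fun f g => ⟨(e4 f g).1.trans (hw f g), (e4 f g).2⟩⟩
      simpa [ICtx.plug] using hr (.hole [] []) E (by simpa [ICtx.plug] using e2)
    · exact h4 i k D hD h0
  · intro H D1 X1 X2 h1 h2 _ h
    exact (single_split h1 h2 h).elim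
  · intro H D1 X1 X2 h1 h2 _ h
    exact (single_split h1 h2 h).elim

theorem good_id (p : ℕ) : Good [.leaf (.prim p)] (.prim p) := by
  refine ⟨.id p, fun G D hD h => ?_⟩
  rcases plug_eq_single hD h with ⟨rfl, rfl⟩ | ⟨i, k, rfl, h⟩
  · exact ⟨.prim p, trivial, .id p, .id p, fun f g => by simp [wtH, wtT, wtC]⟩
  · cases h

theorem good_mulL (c : ICtx) (A B C) (h : Good (c.plug [.leaf A, .leaf B]) C) :
    Good (c.plug [.leaf (.mul A B)]) C :=
  left_single _ _ (by simp) (fun c C h => .mulL c A B C h)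
    (fun f g => by simp [wtH, wtT, wtTy]) c C h (fun _ _ _ _ h => by cases h)

theorem good_diaL (c : ICtx) (i A C) (h : Good (c.plug [.node i [.leaf A]]) C) :
    Good (c.plug [.leaf (.dia i A)]) C :=
  left_single _ _ (by simp) (fun c C h => .diaL c i A C h)
    (fun f g => by simp [wtH, wtT, wtTy]) c C h (fun _ _ _ _ h => by cases h)

theorem diaOneL (c : ICtx) (i C) (h : IProvS1 (c.plug [.node i []]) C) :
    IProvS1 (c.plug [.leaf (.dia i .one)]) C := by
  apply IProvS1.diaL
  have := IProvS1.oneL (comp c (.brk i (.hole [] []) [] [])) C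
    (by simpa [comp_plug, ICtx.plug] using h)
  simpa [comp_plug, ICtx.plug] using this

theorem diaOneR (i) : IProvS1 [.node i []] (.dia i .one) := .diaR _ _ _ .oneR

theorem good_diaOneL (c : ICtx) (i C) (h : Good (c.plug [.node i []]) C) :
    Good (c.plug [.leaf (.dia i .one)]) C :=
  left_single _ _ (by simp) (fun c C h => diaOneL c i C h)
    (fun f g => by simp [wtH, wtT, wtTy]) c C h (fun _ _ _ _ h => by cases h)

theorem good_boxL (c : ICtx) (i A C) (h : Good (c.plug [.leaf A]) C) :
    Good (c.plug [.node i [.leaf (.box i A)]]) C := by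
  refine left_single _ _ (by simp) (fun c C h => .boxL c i A C h)
    (fun f g => by simp [wtH, wtT, wtTy]; omega) c C h ?_
  intro j k D hD e
  simp only [ITree.node.injEq] at e
  obtain ⟨rfl, e⟩ := e
  rcases plug_eq_single hD e with ⟨rfl, rfl⟩ | ⟨i, k, rfl, h⟩
  · obtain ⟨E, e1, e2, e3, e4⟩ := h.2 c [.leaf A] (by simp) rfl
    refine ⟨.box i E, e1, ?_, ?_, fun f g => ?_⟩
    · apply IProvS1.boxR
      simpa [ICtx.plug] using IProvS1.boxL (.hole [] []) i A E (by simpa [ICtx.plug] using e2)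
    · simpa [ICtx.plug, comp_plug] using IProvS1.boxL c i E C e3
    · have := e4 f g
      simp [wtH, wtT, wtTy, wtC_comp, wtC] at *
      omega
  · cases h

theorem good_diaOneR (i) : Good [.node i []] (.dia i .one) := by
  refine ⟨diaOneR i, fun G D hD h => ?_⟩
  rcases plug_eq_single hD h with ⟨rfl, rfl⟩ | ⟨j, k, rfl, h0⟩
  · refine ⟨.dia i .one, trivial, diaOneR i, ?_, fun f g => by simp [wtH, wtT, wtC, wtTy]⟩
    exact diaOneL (.hole [] []) i _ (by simpa [ICtx.plug] using diaOneR i)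
  · simp only [ITree.node.injEq] at h0
    exact absurd h0.2.symm (plug_ne_nil _ hD)

theorem good_diaR (S : IHedge) (i A) (h : Good S A) : Good [.node i S] (.dia i A) := by
  refine ⟨.diaR _ _ _ h.1, fun G D hD e => ?_⟩
  rcases plug_eq_single hD e with ⟨rfl, rfl⟩ | ⟨j, k, rfl, e0⟩
  · by_cases hS : S = []
    · subst hS
      refine ⟨.dia i .one, trivial, diaOneR i, ?_, fun f g => by simp [wtH, wtT, wtC, wtTy]⟩
      exact diaOneL (.hole [] []) i _ (by simpa [ICtx.plug] using IProvS1.diaR _ i _ h.1)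
    · obtain ⟨E, e1, e2, e3, e4⟩ := h.2 (.hole [] []) S hS (by simp [ICtx.plug])
      refine ⟨.dia i E, guarded_dia e1, .diaR _ _ _ e2, ?_, fun f g => ?_⟩
      · apply IProvS1.diaL
        simpa [ICtx.plug] using IProvS1.diaR _ i _ e3
      · have := e4 f g
        simp [wtH, wtT, wtTy, wtC] at *
        omega
  · simp only [ITree.node.injEq] at e0
    obtain ⟨rfl, e0⟩ := e0
    obtain ⟨E, e1, e2, e3, e4⟩ := h.2 k D hD e0
    refine ⟨E, e1, e2, by simpa [ICtx.plug] using IProvS1.diaR _ i _ e3, fun f g => ?_⟩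
    have := e4 f g
    simp [wtH, wtTy, wtC] at *
    omega

theorem good_boxR (S : IHedge) (i A) (h : Good [.node i S] A) : Good S (.box i A) := by
  refine ⟨.boxR _ _ _ h.1, fun G D hD e => ?_⟩
  obtain ⟨E, e1, e2, e3, e4⟩ := h.2 (.brk i G [] []) D hD (by simp [e, ICtx.plug])
  refine ⟨E, e1, e2, .boxR _ _ _ (by simpa [ICtx.plug] using e3), fun f g => ?_⟩
  have := e4 f g
  simp [wtH, wtTy, wtC] at *
  omega

theorem good_ldivR (S : IHedge) (A B) (h : Good (.leaf A :: S) B) : Good S (.ldiv A B) := by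
  refine ⟨.ldivR _ _ _ h.1, fun G D hD e => ?_⟩
  obtain ⟨E, e1, e2, e3, e4⟩ := h.2 (comp (.hole [.leaf A] []) G) D hD
    (by simp [e, ICtx.plug, comp_plug])
  refine ⟨E, e1, e2, .ldivR _ _ _ (by simpa [ICtx.plug, comp_plug] using e3), fun f g => ?_⟩
  have := e4 f g
  simp [wtH, wtT, wtTy, wtC, wtC_comp] at *
  omega

theorem good_rdivR (S : IHedge) (A B) (h : Good (S ++ [.leaf A]) B) : Good S (.rdiv B A) := by
  refine ⟨.rdivR _ _ _ h.1, fun G D hD e => ?_⟩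
  obtain ⟨E, e1, e2, e3, e4⟩ := h.2 (comp (.hole [] [.leaf A]) G) D hD
    (by simp [e, ICtx.plug, comp_plug])
  refine ⟨E, e1, e2, .rdivR _ _ _ (by simpa [ICtx.plug, comp_plug] using e3), fun f g => ?_⟩
  have := e4 f g
  simp [wtH, wtT, wtTy, wtC, wtC_comp] at *
  omega

theorem plug_eq_append {K : ICtx} {D S T : IHedge} (hD : D ≠ []) (h : S ++ T = K.plug D) :
    (∃ k, K = comp (.hole [] T) k ∧ S = k.plug D) ∨
    (∃ k, K = comp (.hole S []) k ∧ T = k.plug D) ∨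
    (∃ a b d1 d2, d1 ≠ [] ∧ d2 ≠ [] ∧ K = .hole a b ∧ D = d1 ++ d2 ∧ S = a ++ d1 ∧ T = d2 ++ b) := by
  cases K with
  | hole a b =>
    simp only [ICtx.plug, List.append_assoc] at h
    rcases List.append_eq_append_iff.1 h with ⟨u, h1, h2⟩ | ⟨u, h1, h2⟩
    · subst h1 h2
      exact .inr (.inl ⟨.hole u b, by simp [comp], by simp [ICtx.plug]⟩)
    · subst h1
      rcases List.append_eq_append_iff.1 h2 with ⟨v, h3, h4⟩ | ⟨v, h3, h4⟩
      · subst h3 h4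
        exact .inl ⟨.hole a v, by simp [comp], by simp [ICtx.plug]⟩
      · subst h3 h4
        by_cases hu : u = []
        · subst hu
          exact .inr (.inl ⟨.hole [] b, by simp [comp], by simp [ICtx.plug]⟩)
        by_cases hv : v = []
        · subst hv
          exact .inl ⟨.hole a [], by simp [comp], by simp [ICtx.plug]⟩
        exact .inr (.inr ⟨a, b, u, v, hu, hv, rfl, rfl, rfl, rfl⟩)
  | brk i c p q =>
    simp only [ICtx.plug] at h
    rcases List.append_eq_append_iff.1 h with ⟨u, h1, h2⟩ | ⟨u, h1, h2⟩
    · subst h1 h2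
      exact .inr (.inl ⟨.brk i c u q, by simp [comp], by simp [ICtx.plug]⟩)
    · subst h1
      rcases u with _ | ⟨t, u⟩
      · simp at h2
        subst h2
        exact .inr (.inl ⟨.brk i c [] q, by simp [comp], by simp [ICtx.plug]⟩)
      · simp at h2
        obtain ⟨rfl, rfl⟩ := h2
        exact .inl ⟨.brk i c p u, by simp [comp], by simp [ICtx.plug]⟩

theorem good_mulR (S T : IHedge) (A B) (h : Good S A) (h' : Good T B) :
    Good (S ++ T) (.mul A B) := by
  refine ⟨.mulR _ _ _ _ h.1 h'.1, fun G D hD e => ?_⟩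
  rcases plug_eq_append hD e with ⟨k, rfl, e0⟩ | ⟨k, rfl, e0⟩ |
    ⟨a, b, d1, d2, hd1, hd2, rfl, rfl, rfl, rfl⟩
  · obtain ⟨E, e1, e2, e3, e4⟩ := h.2 k D hD e0
    refine ⟨E, e1, e2, by simpa [ICtx.plug, comp_plug] using IProvS1.mulR _ _ _ _ e3 h'.1,
      fun f g => ?_⟩
    have := e4 f g
    simp [wtH, wtTy, wtC, wtC_comp] at *
    omega
  · obtain ⟨E, e1, e2, e3, e4⟩ := h'.2 k D hD e0
    refine ⟨E, e1, e2, by simpa [ICtx.plug, comp_plug] using IProvS1.mulR _ _ _ _ h.1 e3,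
      fun f g => ?_⟩
    have := e4 f g
    simp [wtH, wtTy, wtC, wtC_comp] at *
    omega
  · obtain ⟨E, e1, e2, e3, e4⟩ := h.2 (.hole a []) d1 hd1 (by simp [ICtx.plug])
    obtain ⟨F, f1, f2, f3, f4⟩ := h'.2 (.hole [] b) d2 hd2 (by simp [ICtx.plug])
    refine ⟨.mul E F, ⟨e1, f1⟩, .mulR _ _ _ _ e2 f2, ?_, fun f g => ?_⟩
    · apply IProvS1.mulL
      simpa [ICtx.plug] using IProvS1.mulR _ _ _ _ e3 f3
    · have := e4 f g
      have := f4 f g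
      simp [wtH, wtTy, wtC, wtH_append] at *
      omega

theorem good_ldivL (S : IHedge) (c : ICtx) (A B C) (h : Good S A) (h' : Good (c.plug [.leaf B]) C) :
    Good (c.plug (S ++ [.leaf (.ldiv A B)])) C := by
  have key : ∀ (H : ICtx) (D2 X1 X2 : IHedge), X1 ≠ [] → S = X1 ++ X2 →
      c = comp H (.hole [] D2) →
      Interp (comp H (.hole X1 [])) (X2 ++ [.leaf (.ldiv A B)] ++ D2) C := by
    intro H D2 X1 X2 hX1 hS hc
    obtain ⟨F, f1, f2, f3, f4⟩ := h.2 (.hole [] X2) X1 hX1 (by simp [ICtx.plug, hS])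
    obtain ⟨E, e1, e2, e3, e4⟩ := h'.2 H (.leaf B :: D2) (by simp)
      (by simp [ICtx.plug, comp_plug, hc])
    refine ⟨.ldiv F E, ⟨f1, e1⟩, ?_, ?_, fun f g => ?_⟩
    · apply IProvS1.ldivR
      simpa [ICtx.plug] using IProvS1.ldivL _ (.hole [] D2) A B E f3
        (by simpa [ICtx.plug] using e2)
    · simpa [ICtx.plug, comp_plug] using IProvS1.ldivL _ H F E C f2 e3
    · have := e4 f g
      have := f4 f g
      simp [wtH, wtT, wtTy, wtC, wtC_comp, wtH_append] at *
      omega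
  refine left_main _ _ (by simp) (fun k C hk => .ldivL S k A B C h.1 hk)
    (fun f g => by simp [wtH, wtT, wtTy, wtH_append]; omega) c C h' ?_ ?_ ?_
  · intro K D hD e
    rcases plug_eq_append hD e with ⟨k, rfl, e0⟩ | ⟨k, rfl, e0⟩ |
      ⟨a, b, d1, d2, hd1, hd2, rfl, rfl, hS, e⟩
    · obtain ⟨E, e1, e2, e3, e4⟩ := h.2 k D hD e0
      refine ⟨E, e1, e2, ?_, fun f g => ?_⟩
      · simpa [ICtx.plug, comp_plug] using IProvS1.ldivL _ c A B C e3 h'.1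
      · have := e4 f g
        simp [wtH, wtT, wtTy, wtC, wtC_comp, wtH_append] at *
        omega
    · rcases plug_eq_single hD e0 with ⟨rfl, rfl⟩ | ⟨j, k, rfl, e1⟩
      · by_cases hS : S = []
        · subst hS
          obtain ⟨E, e1, e2, e3, e4⟩ := h'.2 c _ (by simp) rfl
          refine ⟨E, e1, ?_, ?_, fun f g => ?_⟩
          · simpa [ICtx.plug] using IProvS1.ldivL [] (.hole [] []) A B E h.1
              (by simpa [ICtx.plug] using e2)
          · simpa [comp, comp_nil] using e3
          · have := e4 f g
            simp [wtH, wtT, wtTy, wtC, wtC_comp, wtH_append] at *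
            omega
        · simpa [comp] using key c [] S [] hS (by simp) (by rw [comp_nil])
      · cases e1
    · have hb : b = [] := by
        rcases d2 with _ | ⟨t, d2⟩
        · exact absurd rfl hd2
        · simp at e; exact e.2.2
      subst hb
      simp at e
      subst e
      by_cases ha : a = []
      · subst ha
        simp at hS
        subst hS
        rw [comp_nil]
        obtain ⟨E, e1, e2, e3, e4⟩ := h'.2 c _ (by simp) rfl
        refine ⟨E, e1, ?_, e3, fun f g => ?_⟩
        · simpa [ICtx.plug] using IProvS1.ldivL S (.hole [] []) A B E h.1
            (by simpa [ICtx.plug] using e2)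
        · have := e4 f g
          simp [wtH, wtT, wtTy, wtH_append] at *
          omega
      · simpa using key c [] a d1 ha hS (by rw [comp_nil])
  · intro H D1 X1 X2 hX1 hX2 hD1 e hc
    rcases List.eq_nil_or_concat X2 with rfl | ⟨Z, t, rfl⟩
    · exact absurd rfl hX2
    · have e' : S ++ [.leaf (.ldiv A B)] = (X1 ++ Z) ++ [t] := by simpa using e
      obtain ⟨rfl, e'⟩ := List.append_inj' e' rfl
      simp at e'
      subst e'
      obtain ⟨E, e1, e2, e3, e4⟩ := h'.2 (comp H (.hole [] [.leaf B])) D1 hD1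
        (by simp [ICtx.plug, comp_plug, hc])
      obtain ⟨F, f1, f2, f3, f4⟩ := h.2 (.hole [] Z) X1 hX1 (by simp [ICtx.plug])
      refine ⟨.mul E F, ⟨e1, f1⟩, .mulR _ _ _ _ e2 f2, ?_, fun f g => ?_⟩
      · apply IProvS1.mulL
        simpa [ICtx.plug, comp_plug] using IProvS1.ldivL _ (comp H (.hole [.leaf E] [])) A B C f3
          (by simpa [ICtx.plug, comp_plug] using e3)
      · have := e4 f g
        have := f4 f g
        simp [wtH, wtT, wtTy, wtC, wtC_comp, wtH_append] at *
        omega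
  · intro H D2 X1 X2 hX1 hX2 hD2 e hc
    rcases List.eq_nil_or_concat X2 with rfl | ⟨Z, t, rfl⟩
    · exact absurd rfl hX2
    · have e' : S ++ [.leaf (.ldiv A B)] = (X1 ++ Z) ++ [t] := by simpa using e
      obtain ⟨hS, e'⟩ := List.append_inj' e' rfl
      simp at e'
      subst e'
      simpa using key H D2 X1 Z hX1 hS hc

theorem good_rdivL (S : IHedge) (c : ICtx) (A B C) (h : Good S A) (h' : Good (c.plug [.leaf B]) C) :
    Good (c.plug (.leaf (.rdiv B A) :: S)) C := by
  have key : ∀ (H : ICtx) (D2 X1 X2 : IHedge), X1 ≠ [] → S = X2 ++ X1 →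
      c = comp H (.hole D2 []) →
      Interp (comp H (.hole [] X1)) (D2 ++ .leaf (.rdiv B A) :: X2) C := by
    intro H D2 X1 X2 hX1 hS hc
    obtain ⟨F, f1, f2, f3, f4⟩ := h.2 (.hole X2 []) X1 hX1 (by simp [ICtx.plug, hS])
    obtain ⟨E, e1, e2, e3, e4⟩ := h'.2 H (D2 ++ [.leaf B]) (by simp)
      (by simp [ICtx.plug, comp_plug, hc])
    refine ⟨.rdiv E F, ⟨e1, f1⟩, ?_, ?_, fun f g => ?_⟩
    · apply IProvS1.rdivR
      simpa [ICtx.plug] using IProvS1.rdivL _ (.hole D2 []) A B E f3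
        (by simpa [ICtx.plug] using e2)
    · simpa [ICtx.plug, comp_plug] using IProvS1.rdivL _ H F E C f2 e3
    · have := e4 f g
      have := f4 f g
      simp [wtH, wtT, wtTy, wtC, wtC_comp, wtH_append] at *
      omega
  refine left_main _ _ (by simp) (fun k C hk => .rdivL S k A B C h.1 hk)
    (fun f g => by simp [wtH, wtT, wtTy]; omega) c C h' ?_ ?_ ?_
  · intro K D hD e
    have e : [.leaf (.rdiv B A)] ++ S = K.plug D := e
    rcases plug_eq_append hD e with ⟨k, rfl, e0⟩ | ⟨k, rfl, e0⟩ |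
      ⟨a, b, d1, d2, hd1, hd2, rfl, rfl, e, hS⟩
    · rcases plug_eq_single hD e0 with ⟨rfl, rfl⟩ | ⟨j, k, rfl, e1⟩
      · by_cases hS : S = []
        · subst hS
          obtain ⟨E, e1, e2, e3, e4⟩ := h'.2 c _ (by simp) rfl
          refine ⟨E, e1, ?_, ?_, fun f g => ?_⟩
          · simpa [ICtx.plug] using IProvS1.rdivL [] (.hole [] []) A B E h.1
              (by simpa [ICtx.plug] using e2)
          · simpa [comp, comp_nil] using e3
          · have := e4 f g
            simp [wtH, wtT, wtTy, wtC, wtC_comp] at *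
            omega
        · simpa [comp] using key c [] S [] hS (by simp) (by rw [comp_nil])
      · cases e1
    · obtain ⟨E, e1, e2, e3, e4⟩ := h.2 k D hD e0
      refine ⟨E, e1, e2, ?_, fun f g => ?_⟩
      · simpa [ICtx.plug, comp_plug] using IProvS1.rdivL _ c A B C e3 h'.1
      · have := e4 f g
        simp [wtH, wtT, wtTy, wtC, wtC_comp] at *
        omega
    · have ha : a = [] := by
        rcases a with _ | ⟨t, a⟩
        · rfl
        · simp at e; exact absurd e.2.2 hd1
      subst ha
      simp at e
      subst e
      by_cases hb : b = []
      · subst hb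
        simp at hS
        subst hS
        rw [comp_nil]
        obtain ⟨E, e1, e2, e3, e4⟩ := h'.2 c _ (by simp) rfl
        refine ⟨E, e1, ?_, e3, fun f g => ?_⟩
        · simpa [ICtx.plug] using IProvS1.rdivL S (.hole [] []) A B E h.1
            (by simpa [ICtx.plug] using e2)
        · have := e4 f g
          simp [wtH, wtT, wtTy] at *
          omega
      · simpa using key c [] b d2 hb hS (by rw [comp_nil])
  · intro H D1 X1 X2 hX1 hX2 hD1 e hc
    rcases X1 with _ | ⟨t, Z⟩
    · exact absurd rfl hX1
    · simp at e
      obtain ⟨rfl, hS⟩ := e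
      simpa using key H D1 X2 Z hX2 hS hc
  · intro H D2 X1 X2 hX1 hX2 hD2 e hc
    rcases X1 with _ | ⟨t, Z⟩
    · exact absurd rfl hX1
    · simp at e
      obtain ⟨rfl, rfl⟩ := e
      obtain ⟨E, e1, e2, e3, e4⟩ := h'.2 (comp H (.hole [.leaf B] [])) D2 hD2
        (by simp [ICtx.plug, comp_plug, hc])
      obtain ⟨F, f1, f2, f3, f4⟩ := h.2 (.hole Z []) X2 hX2 (by simp [ICtx.plug])
      refine ⟨.mul F E, ⟨f1, e1⟩, .mulR _ _ _ _ f2 e2, ?_, fun f g => ?_⟩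
      · apply IProvS1.mulL
        simpa [ICtx.plug, comp_plug] using IProvS1.rdivL _ (comp H (.hole [] [.leaf E])) A B C f3
          (by simpa [ICtx.plug, comp_plug] using e3)
      · have := e4 f g
        have := f4 f g
        simp [wtH, wtT, wtTy, wtC, wtC_comp, wtH_append] at *
        omega

/-! Semantic cut elimination. -/

def cl (S : Set IHedge) : Set IHedge :=
  {X | ∀ (c : ICtx) (C : ITy), (∀ Y ∈ S, Good (c.plug Y) C) → Good (c.plug X) C}

def sem : ITy → Set IHedge
  | .prim p => {X | Good X (.prim p)}
  | .one => cl {[]}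
  | .ldiv A B => {X | ∀ Y ∈ sem A, Y ++ X ∈ sem B}
  | .rdiv B A => {X | ∀ Y ∈ sem A, X ++ Y ∈ sem B}
  | .mul A B => cl {X | ∃ Y ∈ sem A, ∃ Z ∈ sem B, X = Y ++ Z}
  | .dia i A => cl {X | ∃ Y ∈ sem A, X = [.node i Y]}
  | .box i A => {X | [.node i X] ∈ sem A}

theorem subset_cl {S : Set IHedge} {X} (h : X ∈ S) : X ∈ cl S := fun _ _ hY => hY X h

theorem cl_plug {S T : Set IHedge} (k : ICtx) (h : ∀ Y ∈ S, k.plug Y ∈ cl T) {X} (hX : X ∈ cl S) :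
    k.plug X ∈ cl T := by
  intro c C hc
  have := hX (comp c k) C (fun Y hY => by rw [comp_plug]; exact h Y hY c C hc)
  rwa [comp_plug] at this

theorem cl_cl {S : Set IHedge} {X} (h : X ∈ cl (cl S)) : X ∈ cl S := by
  simpa [ICtx.plug] using cl_plug (T := S) (.hole [] [])
    (fun Y hY => by simpa [ICtx.plug] using hY) h

theorem sem_closed (A : ITy) {X} (h : X ∈ cl (sem A)) : X ∈ sem A := by
  induction A generalizing X with
  | prim p =>
    simpa [ICtx.plug, sem] using h (.hole [] []) (.prim p)
      (fun Y hY => by simpa [ICtx.plug, sem] using hY)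
  | one => exact cl_cl h
  | ldiv A B _ ih =>
    intro Y hY
    apply ih
    simpa [ICtx.plug] using cl_plug (T := sem B) (.hole Y [])
      (fun Z hZ => by simpa [ICtx.plug] using subset_cl (hZ Y hY)) h
  | rdiv B A ih _ =>
    intro Y hY
    apply ih
    simpa [ICtx.plug] using cl_plug (T := sem B) (.hole [] Y)
      (fun Z hZ => by simpa [ICtx.plug] using subset_cl (hZ Y hY)) h
  | mul A B _ _ => exact cl_cl h
  | dia i A _ => exact cl_cl h
  | box i A ih =>
    apply ih
    simpa [ICtx.plug] using cl_plug (T := sem A) (.brk i (.hole [] []) [] [])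
      (fun Z hZ => by simpa [ICtx.plug] using subset_cl (S := sem A) hZ) h

theorem sem_plug {S : Set IHedge} (A : ITy) (k : ICtx) (h : ∀ Y ∈ S, k.plug Y ∈ sem A) {X}
    (hX : X ∈ cl S) : k.plug X ∈ sem A :=
  sem_closed A (cl_plug k (fun Y hY => subset_cl (h Y hY)) hX)

mutual
def semT : ITree → Set IHedge
  | .leaf A => sem A
  | .node i ts => {X | ∃ Y ∈ semH ts, X = [.node i Y]}
def semH : List ITree → Set IHedge
  | [] => {[]}
  | t :: ts => {X | ∃ Y ∈ semT t, ∃ Z ∈ semH ts, X = Y ++ Z}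
end

theorem semH_append (S T : IHedge) (X : IHedge) :
    X ∈ semH (S ++ T) ↔ ∃ Y ∈ semH S, ∃ Z ∈ semH T, X = Y ++ Z := by
  induction S generalizing X with
  | nil => simp [semH]
  | cons t S ih =>
    simp only [List.cons_append, semH, Set.mem_ofPred_eq, ih]
    constructor
    · rintro ⟨Y, hY, _, ⟨Z, hZ, W, hW, rfl⟩, rfl⟩
      exact ⟨_, ⟨Y, hY, Z, hZ, rfl⟩, W, hW, by simp⟩
    · rintro ⟨_, ⟨Y, hY, Z, hZ, rfl⟩, W, hW, rfl⟩
      exact ⟨Y, hY, _, ⟨Z, hZ, W, hW, rfl⟩, by simp⟩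

theorem semH_leaf (A : ITy) (X : IHedge) : X ∈ semH [.leaf A] ↔ X ∈ sem A := by
  simp [semH, semT]

theorem semH_plug (c : ICtx) (S : IHedge) (X : IHedge) (h : X ∈ semH (c.plug S)) :
    ∃ k : ICtx, ∃ Y ∈ semH S, X = k.plug Y ∧ ∀ T, ∀ Z ∈ semH T, k.plug Z ∈ semH (c.plug T) := by
  induction c generalizing X with
  | hole a b =>
    simp only [ICtx.plug, semH_append] at h
    obtain ⟨_, ⟨U, hU, V, hV, rfl⟩, W, hW, rfl⟩ := h
    refine ⟨.hole U W, V, hV, rfl, fun T Z hZ => ?_⟩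
    simp only [ICtx.plug, semH_append]
    exact ⟨_, ⟨U, hU, Z, hZ, rfl⟩, W, hW, rfl⟩
  | brk i c a b ih =>
    simp only [ICtx.plug, semH_append] at h
    obtain ⟨U, hU, V, hV, rfl⟩ := h
    obtain ⟨_, ⟨P, hP, rfl⟩, W, hW, rfl⟩ := hV
    obtain ⟨k, Y, hY, rfl, hk⟩ := ih P hP
    refine ⟨.brk i k U W, Y, hY, by simp [ICtx.plug], fun T Z hZ => ?_⟩
    simp only [ICtx.plug, semH_append]
    exact ⟨U, hU, _, ⟨_, ⟨_, hk T Z hZ, rfl⟩, W, hW, rfl⟩, by simp⟩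

theorem sound {S : IHedge} {A : ITy} (h : IProvS1 S A) : ∀ X ∈ semH S, X ∈ sem A := by
  induction h with
  | id p => intro X hX; exact (semH_leaf _ _).1 hX
  | ldivL G D A B C _ _ ih1 ih2 =>
    intro X hX
    obtain ⟨k, Y, hY, rfl, hk⟩ := semH_plug _ _ _ hX
    obtain ⟨U, hU, V, hV, rfl⟩ := (semH_append _ _ _).1 hY
    exact ih2 _ (hk _ _ ((semH_leaf _ _).2 ((semH_leaf _ _).1 hV U (ih1 U hU))))
  | ldivR P A B _ ih =>
    intro X hX Y hY
    exact ih _ ⟨Y, hY, X, hX, rfl⟩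
  | rdivL G D A B C _ _ ih1 ih2 =>
    intro X hX
    obtain ⟨k, Y, hY, rfl, hk⟩ := semH_plug _ _ _ hX
    obtain ⟨V, hV, U, hU, rfl⟩ := hY
    exact ih2 _ (hk _ _ ((semH_leaf _ _).2 (hV U (ih1 U hU))))
  | rdivR P A B _ ih =>
    intro X hX Y hY
    exact ih _ ((semH_append _ _ _).2 ⟨X, hX, Y, (semH_leaf _ _).2 hY, rfl⟩)
  | mulL G A B C _ ih =>
    intro X hX
    obtain ⟨k, Y, hY, rfl, hk⟩ := semH_plug _ _ _ hX
    refine sem_plug C k ?_ ((semH_leaf _ _).1 hY)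
    rintro _ ⟨U, hU, V, hV, rfl⟩
    exact ih _ (hk _ _ ⟨U, hU, V, (semH_leaf _ _).2 hV, rfl⟩)
  | mulR G D A B _ _ ih1 ih2 =>
    intro X hX
    obtain ⟨U, hU, V, hV, rfl⟩ := (semH_append _ _ _).1 hX
    exact subset_cl ⟨U, ih1 U hU, V, ih2 V hV, rfl⟩
  | diaL G i A B _ ih =>
    intro X hX
    obtain ⟨k, Y, hY, rfl, hk⟩ := semH_plug _ _ _ hX
    refine sem_plug B k ?_ ((semH_leaf _ _).1 hY)
    rintro _ ⟨U, hU, rfl⟩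
    exact ih _ (hk _ _ ⟨_, ⟨U, (semH_leaf _ _).2 hU, rfl⟩, [], rfl, rfl⟩)
  | diaR G i A _ ih =>
    intro X hX
    obtain ⟨_, ⟨U, hU, rfl⟩, _, rfl, rfl⟩ := hX
    exact subset_cl ⟨U, ih U hU, rfl⟩
  | boxL G i A B _ ih =>
    intro X hX
    obtain ⟨k, Y, hY, rfl, hk⟩ := semH_plug _ _ _ hX
    obtain ⟨_, ⟨U, hU, rfl⟩, _, rfl, rfl⟩ := hY
    have hU' : [ITree.node i U] ∈ sem A := (semH_leaf (.box i A) U).1 hU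
    exact ih _ (hk _ _ ((semH_leaf _ _).2 hU'))
  | boxR G i A _ ih =>
    intro X hX
    exact ih _ ⟨_, ⟨X, hX, rfl⟩, [], rfl, rfl⟩
  | oneL G A _ ih =>
    intro X hX
    obtain ⟨k, Y, hY, rfl, hk⟩ := semH_plug _ _ _ hX
    refine sem_plug A k ?_ ((semH_leaf _ _).1 hY)
    rintro _ rfl
    exact ih _ (hk _ _ rfl)
  | oneR => intro X hX; exact subset_cl hX
  | cut G D A B _ _ ih1 ih2 =>
    intro X hX
    obtain ⟨k, Y, hY, rfl, hk⟩ := semH_plug _ _ _ hX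
    exact ih2 _ (hk _ _ ((semH_leaf _ _).2 (ih1 _ hY)))

theorem cl_good {S : Set IHedge} {C : ITy} (h : ∀ Y ∈ S, Good Y C) {X} (hX : X ∈ cl S) :
    Good X C := by
  simpa [ICtx.plug] using hX (.hole [] []) C (fun Y hY => by simpa [ICtx.plug] using h Y hY)

theorem mem_of_rule {A : ITy} {X Y : IHedge} (hY : Y ∈ sem A)
    (h : ∀ (c : ICtx) C, Good (c.plug Y) C → Good (c.plug X) C) : X ∈ sem A :=
  sem_closed A (fun c C hc => h c C (hc Y hY))

theorem truth (A : ITy) (hA : A.guarded) : [.leaf A] ∈ sem A ∧ ∀ X ∈ sem A, Good X A := by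
  induction A with
  | prim p => exact ⟨good_id p, fun X h => h⟩
  | one => exact hA.elim
  | ldiv A B ihA ihB =>
    obtain ⟨a1, a2⟩ := ihA hA.1
    obtain ⟨b1, b2⟩ := ihB hA.2
    refine ⟨fun Y hY => mem_of_rule b1 fun c C h => good_ldivL Y c A B C (a2 Y hY) h,
      fun X hX => good_ldivR _ _ _ (b2 _ (hX _ a1))⟩
  | rdiv B A ihB ihA =>
    obtain ⟨a1, a2⟩ := ihA hA.2
    obtain ⟨b1, b2⟩ := ihB hA.1
    refine ⟨fun Y hY => mem_of_rule b1 fun c C h => good_rdivL Y c A B C (a2 Y hY) h,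
      fun X hX => good_rdivR _ _ _ (b2 _ (hX _ a1))⟩
  | mul A B ihA ihB =>
    obtain ⟨a1, a2⟩ := ihA hA.1
    obtain ⟨b1, b2⟩ := ihB hA.2
    refine ⟨fun c C h => good_mulL c A B C (h _ ⟨_, a1, _, b1, rfl⟩), fun X hX => cl_good ?_ hX⟩
    rintro _ ⟨U, hU, V, hV, rfl⟩
    exact good_mulR _ _ _ _ (a2 U hU) (b2 V hV)
  | dia i A ihA =>
    rcases guarded_dia_cases hA with rfl | hA
    · refine ⟨fun c C h => good_diaOneL c i C (h _ ⟨_, subset_cl rfl, rfl⟩),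
        fun X hX => cl_good ?_ hX⟩
      rintro _ ⟨U, hU, rfl⟩
      have := hU (.brk i (.hole [] []) [] []) (.dia i .one)
        (by rintro _ rfl; simpa [ICtx.plug] using good_diaOneR i)
      simpa [ICtx.plug] using this
    · obtain ⟨a1, a2⟩ := ihA hA
      refine ⟨fun c C h => good_diaL c i A C (h _ ⟨_, a1, rfl⟩), fun X hX => cl_good ?_ hX⟩
      rintro _ ⟨U, hU, rfl⟩
      exact good_diaR _ _ _ (a2 U hU)
  | box i A ihA =>
    obtain ⟨a1, a2⟩ := ihA hA
    exact ⟨mem_of_rule (A := A) (X := [.node i [.leaf (.box i A)]]) a1 fun c C h => good_boxL c i A C h,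
      fun X hX => good_boxR _ _ _ (a2 _ hX)⟩

mutual
theorem self_memT : (t : ITree) → guardedTree t → [t] ∈ semT t
  | .leaf A, h => (truth A h).1
  | .node _ ts, h => ⟨ts, self_memH ts h, rfl⟩
theorem self_memH : (ts : List ITree) → guardedHedge ts → ts ∈ semH ts
  | [], _ => rfl
  | t :: ts, h => ⟨[t], self_memT t h.1, ts, self_memH ts h.2, rfl⟩
end

theorem sigmaTy_eq (i : ℕ) (A : ITy) :
    sigmaTy i A = wtTy (fun p => if p = i then 1 else 0) (fun _ => 0) A := by
  induction A <;> simp_all [sigmaTy, wtTy]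

theorem tauTy_eq (i : ℕ) (A : ITy) :
    tauTy i A = wtTy (fun _ => 0) (fun p => if p = i then 1 else 0) A := by
  induction A <;> simp_all [tauTy, wtTy]

mutual
theorem sigmaTree_eq (i : ℕ) : (t : ITree) →
    sigmaTree i t = wtT (fun p => if p = i then 1 else 0) (fun _ => 0) t
  | .leaf A => by simp [sigmaTree, wtT, sigmaTy_eq]
  | .node _ ts => by simp [sigmaTree, wtT, sigmaHedge_eq i ts]
theorem sigmaHedge_eq (i : ℕ) : (ts : List ITree) →
    sigmaHedge i ts = wtH (fun p => if p = i then 1 else 0) (fun _ => 0) ts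
  | [] => by simp [sigmaHedge, wtH]
  | t :: ts => by simp [sigmaHedge, wtH, sigmaTree_eq i t, sigmaHedge_eq i ts]
end

mutual
theorem tauTree_eq (i : ℕ) : (t : ITree) →
    tauTree i t = wtT (fun _ => 0) (fun p => if p = i then 1 else 0) t
  | .leaf A => by simp [tauTree, wtT, tauTy_eq]
  | .node _ ts => by simp [tauTree, wtT, tauHedge_eq i ts]
theorem tauHedge_eq (i : ℕ) : (ts : List ITree) →
    tauHedge i ts = wtH (fun _ => 0) (fun p => if p = i then 1 else 0) ts
  | [] => by simp [tauHedge, wtH]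
  | t :: ts => by simp [tauHedge, wtH, tauTree_eq i t, tauHedge_eq i ts]
end

theorem sigmaCtx_eq (i : ℕ) (c : ICtx) :
    sigmaCtx i c = wtC (fun p => if p = i then 1 else 0) (fun _ => 0) c := by
  induction c <;> simp_all [sigmaCtx, wtC, sigmaHedge_eq]

theorem tauCtx_eq (i : ℕ) (c : ICtx) :
    tauCtx i c = wtC (fun _ => 0) (fun p => if p = i then 1 else 0) c := by
  induction c <;> simp_all [tauCtx, wtC, tauHedge_eq]

end GI

/-- Guarded interpolation for L*₁◇_m. -/
theorem guarded_interpolation (G : ICtx) (D : IHedge) (C : ITy)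
    (hD : D ≠ [])
    (hguard : guardedHedge (G.plug D)) (hC : C.guarded)
    (h : IProvS1 (G.plug D) C) :
    ∃ E : ITy,
      E.guarded ∧
      IProvS1 D E ∧
      IProvS1 (G.plug [.leaf E]) C ∧
      (∀ i, sigmaTy i E ≤ min (sigmaHedge i D) (sigmaCtx i G + sigmaTy i C)) ∧
      (∀ i, tauTy i E ≤ min (tauHedge i D) (tauCtx i G + tauTy i C)) := by
  obtain ⟨E, e1, e2, e3, e4⟩ :=
    ((GI.truth C hC).2 _ (GI.sound h _ (GI.self_memH _ hguard))).2 G D hD rfl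
  refine ⟨E, e1, e2, e3, fun i => ?_, fun i => ?_⟩
  · rw [GI.sigmaTy_eq, GI.sigmaTy_eq, GI.sigmaHedge_eq, GI.sigmaCtx_eq]
    exact le_min (e4 _ _).1 (e4 _ _).2
  · rw [GI.tauTy_eq, GI.tauTy_eq, GI.tauHedge_eq, GI.tauCtx_eq]
    exact le_min (e4 _ _).1 (e4 _ _).2
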